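/- For every s > 0 there exists C > 0 such that the following holds. Let u : ℝ³ → ℂ be differentiable with ∇u ∈ L²(ℝ³) and ‖u‖_{L²} = 1, let α : ℝ³ → ℂ satisfy ‖α‖_{h_s} < ∞, and let V be the effective pair potential (the unique real V ∈ L² whose unnormalized Fourier transform equals v). Then the mean-field energy shift μ_{u,α} = (1/2)∫∫_{ℝ³×ℝ³} V(x−y)|u(y)|²|u(x)|² dy dx + Re ∫_{ℝ³} \overline{α(k)} f_u(k) dk + Re ∫_{ℝ³} \overline{α(k)} g_{u,α}(k) dk satisfies |μ_{u,α}| ≤ C ‖u‖_{H¹}² (1 + ‖α‖_{h_s})². -/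

import Mathlib

open MeasureTheory
open scoped ENNReal

noncomputable section

/-- The dispersion relation `ω(k) = √(1+|k|²)` of the massive scalar field. -/
def ω (k : EuclideanSpace ℝ (Fin 3)) : ℝ := Real.sqrt (1 + ‖k‖ ^ 2)

/-- The Gross dressing form factor `B₀(k) = 1/(√(ω(k))·(|k|²+ω(k)))`. -/
def B0 (k : EuclideanSpace ℝ (Fin 3)) : ℝ := 1 / (Real.sqrt (ω k) * (‖k‖ ^ 2 + ω k))

/-- `v(k) = −4/(ω(k)(|k|²+ω(k))) + 2/(|k|²+ω(k))²`. -/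
def vker (k : EuclideanSpace ℝ (Fin 3)) : ℝ :=
  -4 / (ω k * (‖k‖ ^ 2 + ω k)) + 2 / (‖k‖ ^ 2 + ω k) ^ 2

/-- The square of the `H¹`-norm, `‖u‖_{H¹}² = ‖u‖_{L²}² + ‖∇u‖_{L²}²`. -/
def H1sq (u : EuclideanSpace ℝ (Fin 3) → ℂ) : ℝ :=
  (∫ x, ‖u x‖ ^ 2) + ∫ x, ‖fderiv ℝ u x‖ ^ 2

/-- The `H¹`-norm of `u`. -/
def H1norm (u : EuclideanSpace ℝ (Fin 3) → ℂ) : ℝ := Real.sqrt (H1sq u)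

/-- The weighted norm `‖α‖_{h_s} = (∫ ω(k)^{2s}|α(k)|² dk)^{1/2}`. -/
def hsNorm (s : ℝ) (α : EuclideanSpace ℝ (Fin 3) → ℂ) : ℝ :=
  Real.sqrt (∫ k, ω k ^ (2 * s) * ‖α k‖ ^ 2)

/-- The `j`-th partial derivative of `u`. -/
def pd (u : EuclideanSpace ℝ (Fin 3) → ℂ) (j : Fin 3) (x : EuclideanSpace ℝ (Fin 3)) : ℂ :=
  fderiv ℝ u x (EuclideanSpace.single j 1)

/-- `f_u(k) = 2 k B₀(k) · ∫ e^{−ik·x} \bar u(x)(−i∇u(x)) dx`. -/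
def fu (u : EuclideanSpace ℝ (Fin 3) → ℂ) (k : EuclideanSpace ℝ (Fin 3)) : ℂ :=
  ((2 * B0 k : ℝ) : ℂ) * ∑ j : Fin 3, ((k j : ℝ) : ℂ) *
    ∫ x, Complex.exp (-(Complex.I * ((inner ℝ k x : ℝ) : ℂ))) *
      (starRingEnd ℂ) (u x) * (-Complex.I * pd u j x)

/-- The `j`-th component of `F_α(x) = 2 Re ∫ k B₀(k) e^{ik·x} α(k) dk`. -/
def Fα (α : EuclideanSpace ℝ (Fin 3) → ℂ) (j : Fin 3) (x : EuclideanSpace ℝ (Fin 3)) : ℝ :=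
  2 * (∫ k, ((k j * B0 k : ℝ) : ℂ) *
    Complex.exp (Complex.I * ((inner ℝ k x : ℝ) : ℂ)) * α k).re

/-- `g_{u,α}(k) = 2 k B₀(k) · ∫ e^{−ik·x} F_α(x) |u(x)|² dx`. -/
def gualpha (u α : EuclideanSpace ℝ (Fin 3) → ℂ) (k : EuclideanSpace ℝ (Fin 3)) : ℂ :=
  ((2 * B0 k : ℝ) : ℂ) * ∑ j : Fin 3, ((k j : ℝ) : ℂ) *
    ∫ x, Complex.exp (-(Complex.I * ((inner ℝ k x : ℝ) : ℂ))) *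
      ((Fα α j x : ℝ) : ℂ) * ((‖u x‖ ^ 2 : ℝ) : ℂ)

/-- The mean-field energy shift
`μ_{u,α} = ½∬ V(x−y)|u(y)|²|u(x)|² + Re⟨α, f_u⟩ + Re⟨α, g_{u,α}⟩`. -/
def μshift (V : EuclideanSpace ℝ (Fin 3) → ℝ) (u α : EuclideanSpace ℝ (Fin 3) → ℂ) : ℝ :=
  (1 / 2) * (∫ x, ∫ y, V (x - y) * ‖u y‖ ^ 2 * ‖u x‖ ^ 2) +
    (∫ k, (starRingEnd ℂ) (α k) * fu u k).re +
    (∫ k, (starRingEnd ℂ) (α k) * gualpha u α k).re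

/-! The density `ρ = |u|²` lies in `W^{1,1}` with norm at most `2‖u‖²_{H¹}`, hence
`ω|ρ̂| ≤ 2‖u‖²_{H¹}`. The convolution `V * ρ` has the tempered Fourier transform `vρ̂ = O(ω⁻⁴)`,
which is integrable, so Fourier inversion bounds `V * ρ` uniformly, although `V` itself is only
square integrable. In the two field terms the form factor enters through `|k|B₀ ≤ ω^{-3/2}`, and
Cauchy–Schwarz against the weight `ω^s` bounds `∫ |k|B₀|α|` by `(∫ ω^{-3-2s})^{1/2} ‖α‖_{h_s}`,
where the integral converges because `3 + 2s` exceeds the dimension. -/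

open Module
open scoped FourierTransform SchwartzMap

local notation "ℝ³" => EuclideanSpace ℝ (Fin 3)

section ConvolutionPairing

variable {G : Type*} [AddCommGroup G] [MeasurableSpace G] [MeasurableAdd₂ G] [MeasurableNeg G]
  {μ : Measure G} [SFinite μ] [μ.IsAddRightInvariant] {V f g : G → ℂ}

lemma integrable_mul_sub_mul (hV : MemLp V 2 μ) (hf : Integrable f μ) (hg : MemLp g 2 μ) :
    Integrable (fun p : G × G => V (p.1 - p.2) * f p.2 * g p.1) (μ.prod μ) := by
  have hVf : AEStronglyMeasurable (fun p : G × G => V (p.1 - p.2) * f p.2) (μ.prod μ) :=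
    (hV.1.comp_quasiMeasurePreserving
      (quasiMeasurePreserving_sub_of_right_invariant μ μ)).mul hf.1.comp_snd
  have hm := hVf.mul hg.1.comp_fst
  have hVy (y : G) : MemLp (fun x => V (x - y)) 2 μ :=
    hV.comp_measurePreserving (measurePreserving_sub_right μ y)
  have hV2 : Integrable (fun x => ‖V x‖ ^ 2) μ := (memLp_two_iff_integrable_sq_norm hV.1).1 hV
  have hg2 : Integrable (fun x => ‖g x‖ ^ 2) μ := (memLp_two_iff_integrable_sq_norm hg.1).1 hg
  refine (integrable_prod_iff' hm).2 ⟨.of_forall fun y => ?_, ?_⟩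
  · simpa only [mul_right_comm, Pi.mul_apply] using ((hVy y).integrable_mul hg).mul_const (f y)
  refine (hf.norm.mul_const ((∫ x, ‖V x‖ ^ 2 ∂μ) + ∫ x, ‖g x‖ ^ 2 ∂μ)).mono'
    hm.norm.prod_swap.integral_prod_right' (.of_forall fun y => ?_)
  have hVy2 := hV2.comp_sub_right y
  calc ‖∫ x, ‖V (x - y) * f y * g x‖ ∂μ‖
      = ∫ x, ‖V (x - y) * f y * g x‖ ∂μ :=
        Real.norm_of_nonneg (integral_nonneg fun _ => norm_nonneg _)
    _ ≤ ∫ x, ‖f y‖ * (‖V (x - y)‖ ^ 2 + ‖g x‖ ^ 2) ∂μ := by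
        refine integral_mono_of_nonneg (.of_forall fun _ => norm_nonneg _)
          ((hVy2.add hg2).const_mul _) (.of_forall fun x => ?_)
        simp only [norm_mul]
        nlinarith [two_mul_le_add_sq ‖V (x - y)‖ ‖g x‖, norm_nonneg (f y),
          mul_nonneg (norm_nonneg (V (x - y))) (norm_nonneg (g x))]
    _ = ‖f y‖ * ((∫ x, ‖V x‖ ^ 2 ∂μ) + ∫ x, ‖g x‖ ^ 2 ∂μ) := by
        rw [integral_const_mul, integral_add hVy2 hg2,
          integral_sub_right_eq_self (fun x => ‖V x‖ ^ 2)]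

lemma integral_integral_mul_sub_mul (hV : MemLp V 2 μ) (hf : Integrable f μ) (hg : MemLp g 2 μ) :
    ∫ x, (∫ y, V (x - y) * f y ∂μ) * g x ∂μ = ∫ y, f y * ∫ x, V x * g (x + y) ∂μ ∂μ := by
  calc ∫ x, (∫ y, V (x - y) * f y ∂μ) * g x ∂μ
      = ∫ x, ∫ y, V (x - y) * f y * g x ∂μ ∂μ := by simp only [integral_mul_const]
    _ = ∫ y, ∫ x, V (x - y) * f y * g x ∂μ ∂μ :=
        integral_integral_swap (integrable_mul_sub_mul hV hf hg)
    _ = ∫ y, f y * ∫ x, V x * g (x + y) ∂μ ∂μ := by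
        congr with y
        rw [← integral_const_mul, ← integral_add_right_eq_self _ y]
        congr with x
        rw [add_sub_cancel_right]
        ring

lemma locallyIntegrable_integral_mul_sub [TopologicalSpace G] [WeaklyLocallyCompactSpace G]
    [T2Space G] [OpensMeasurableSpace G] [IsFiniteMeasureOnCompacts μ] (hV : MemLp V 2 μ)
    (hf : Integrable f μ) :
    LocallyIntegrable (fun x => ∫ y, V (x - y) * f y ∂μ) μ := by
  intro x
  obtain ⟨K, hK, hxK⟩ := exists_compact_mem_nhds x
  refine ⟨K, hxK, ?_⟩
  have hg : MemLp (K.indicator fun _ => (1 : ℂ)) 2 μ :=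
    memLp_indicator_const 2 hK.measurableSet 1 (.inr hK.measure_lt_top.ne)
  have h := (integrable_mul_sub_mul hV hf hg).integral_prod_left
  refine (integrable_indicator_iff hK.measurableSet).1 (h.congr (.of_forall fun x => ?_))
  by_cases hx : x ∈ K <;> simp [hx]

end ConvolutionPairing

section AngularFourier

lemma norm_cexp_neg_I_mul (r : ℝ) : ‖Complex.exp (-(Complex.I * (r : ℂ)))‖ = 1 := by
  simp [Complex.norm_exp]

lemma iteratedDeriv_cexp_neg_I_mul (n : ℕ) :
    iteratedDeriv n (fun t : ℝ => Complex.exp (-(Complex.I * (t : ℂ)))) =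
      fun t : ℝ => (-Complex.I) ^ n * Complex.exp (-(Complex.I * (t : ℂ))) := by
  induction n with
  | zero => simp
  | succ n ih =>
    ext t
    have hexp : HasDerivAt (fun t : ℝ => Complex.exp (-(Complex.I * (t : ℂ))))
        (Complex.exp (-(Complex.I * (t : ℂ))) * -(Complex.I * (1 : ℝ))) t :=
      ((hasDerivAt_id t).ofReal_comp.const_mul Complex.I).neg.cexp
    rw [iteratedDeriv_succ, ih, (hexp.const_mul _).deriv, Complex.ofReal_one]
    ring

lemma hasTemperateGrowth_cexp_neg_I_inner {E : Type*} [NormedAddCommGroup E]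
    [InnerProductSpace ℝ E] (y : E) :
    Function.HasTemperateGrowth
      fun k : E => Complex.exp (-(Complex.I * ((inner ℝ k y : ℝ) : ℂ))) := by
  have hexp : Function.HasTemperateGrowth fun t : ℝ => Complex.exp (-(Complex.I * (t : ℂ))) := by
    refine ⟨(contDiff_const.mul Complex.ofRealCLM.contDiff).neg.cexp, fun n => ⟨0, 1, fun t => ?_⟩⟩
    simp [norm_iteratedFDeriv_eq_norm_iteratedDeriv, iteratedDeriv_cexp_neg_I_mul,
      norm_cexp_neg_I_mul]
  have hinner : Function.HasTemperateGrowth fun k : E => inner ℝ k y := by fun_prop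
  exact hexp.comp hinner

variable {E : Type*} [NormedAddCommGroup E] [InnerProductSpace ℝ E] [FiniteDimensional ℝ E]
  [MeasurableSpace E] [BorelSpace E] {f g : E → ℂ}

/-- The Fourier transform with angular frequency, `f̂(x) = ∫ e^{-ik·x} f(k) dk`: the unnormalized
convention of the dressing form factors, as opposed to `e^{-2πik·x}` in Mathlib's `𝓕`. -/
def angularFourier (f : E → ℂ) (x : E) : ℂ :=
  ∫ k, Complex.exp (-(Complex.I * ((inner ℝ k x : ℝ) : ℂ))) * f k

lemma angularFourier_eq_fourierIntegral (f : E → ℂ) :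
    angularFourier f = VectorFourier.fourierIntegral Real.probChar volume (innerₗ E) f := by
  ext x
  rw [VectorFourier.fourierIntegral_probChar, angularFourier]
  congr with k
  rw [smul_eq_mul, innerₗ_apply_apply, neg_mul, mul_comm Complex.I]

lemma angularFourier_eq_fourier (f : E → ℂ) (x : E) :
    angularFourier f x = 𝓕 f ((2 * Real.pi)⁻¹ • x) := by
  rw [Real.fourier_eq', angularFourier]
  congr with k
  rw [smul_eq_mul, inner_smul_right]
  congr 2
  push_cast
  have : (Real.pi : ℂ) ≠ 0 := by exact_mod_cast Real.pi_ne_zero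
  field_simp

lemma norm_angularFourier_le (f : E → ℂ) (x : E) : ‖angularFourier f x‖ ≤ ∫ k, ‖f k‖ := by
  rw [angularFourier_eq_fourierIntegral]
  exact VectorFourier.norm_fourierIntegral_le_integral_norm _ _ _ _ _

lemma continuous_angularFourier (hf : Integrable f) : Continuous (angularFourier f) := by
  rw [angularFourier_eq_fourierIntegral]
  exact VectorFourier.fourierIntegral_continuous Real.continuous_probChar continuous_inner hf

lemma integral_angularFourier_mul_eq (hf : Integrable f) (hg : Integrable g) :
    ∫ x, angularFourier f x * g x = ∫ x, f x * angularFourier g x := by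
  have h := VectorFourier.integral_fourierIntegral_smul_eq_flip (L := innerₗ E)
    Real.continuous_probChar continuous_inner hf hg
  simpa only [angularFourier_eq_fourierIntegral, flip_innerₗ, smul_eq_mul] using h

lemma angularFourier_comp_neg (f : E → ℂ) (x : E) :
    angularFourier (fun k => f (-k)) x = angularFourier f (-x) := by
  rw [angularFourier, angularFourier, ← integral_neg_eq_self _ volume]
  simp only [neg_neg, inner_neg_left, inner_neg_right]

lemma angularFourier_cexp_mul (f : E → ℂ) (y x : E) :
    angularFourier (fun k => Complex.exp (-(Complex.I * ((inner ℝ k y : ℝ) : ℂ))) * f k) x =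
      angularFourier f (x + y) := by
  unfold angularFourier
  congr with k
  rw [inner_add_right, ← mul_assoc, ← Complex.exp_add]
  push_cast
  ring_nf

lemma norm_mul_norm_angularFourier_le (hf : Integrable f) (hd : Differentiable ℝ f)
    (hf' : Integrable (fderiv ℝ f)) (x : E) :
    ‖x‖ * ‖angularFourier f x‖ ≤ ∫ k, ‖fderiv ℝ f k‖ := by
  have hderiv := congrArg norm (congrFun (Real.fourier_fderiv hf hd hf') ((2 * Real.pi)⁻¹ • x))
  have hpi : 0 < 2 * Real.pi := by positivity
  rw [VectorFourier.norm_fourierSMulRight, ← angularFourier_eq_fourier,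
    neg_apply, norm_neg, innerSL_apply_norm, norm_smul, norm_inv,
    Real.norm_of_nonneg hpi.le, mul_inv_cancel_left₀ hpi.ne'] at hderiv
  rw [← hderiv]
  exact VectorFourier.norm_fourierIntegral_le_integral_norm _ _ _ _ _

lemma sqrt_mul_norm_angularFourier_le (hf : Integrable f) (hd : Differentiable ℝ f)
    (hf' : Integrable (fderiv ℝ f)) (x : E) :
    √(1 + ‖x‖ ^ 2) * ‖angularFourier f x‖ ≤ (∫ k, ‖f k‖) + ∫ k, ‖fderiv ℝ f k‖ := by
  have hx : √(1 + ‖x‖ ^ 2) ≤ 1 + ‖x‖ :=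
    Real.sqrt_le_left (by positivity) |>.2 (by nlinarith [norm_nonneg x])
  calc √(1 + ‖x‖ ^ 2) * ‖angularFourier f x‖
      ≤ (1 + ‖x‖) * ‖angularFourier f x‖ := by gcongr
    _ = ‖angularFourier f x‖ + ‖x‖ * ‖angularFourier f x‖ := by ring
    _ ≤ _ := add_le_add (norm_angularFourier_le f x) (norm_mul_norm_angularFourier_le hf hd hf' x)

lemma exists_schwartzMap_angularFourier_eq (g : 𝓢(E, ℂ)) :
    ∃ φ : 𝓢(E, ℂ), angularFourier φ = g ∧
      ∀ k, φ k = (((2 * Real.pi) ^ finrank ℝ E)⁻¹ : ℝ) * angularFourier g (-k) := by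
  have hpi : 2 * Real.pi ≠ 0 := by positivity
  let ψ : 𝓢(E, ℂ) := SchwartzMap.compCLMOfContinuousLinearEquiv ℝ
    (ContinuousLinearEquiv.smulLeft (Units.mk0 (2 * Real.pi) hpi)) g
  have hψ (x : E) : ψ x = g ((2 * Real.pi) • x) := rfl
  refine ⟨𝓕⁻ ψ, ?_, fun k => ?_⟩
  · ext x
    rw [angularFourier_eq_fourier, ← SchwartzMap.fourier_coe,
      FourierTransform.fourier_fourierInv_eq, hψ, smul_inv_smul₀ hpi]
  · have hscale := Measure.integral_comp_smul volume
      (fun x => Complex.exp (-(Complex.I * ((inner ℝ x (-k) : ℝ) : ℂ))) * g x) (2 * Real.pi)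
    rw [abs_of_pos (by positivity)] at hscale
    rw [SchwartzMap.fourierInv_coe, Real.fourierInv_eq', angularFourier, ← Complex.real_smul,
      ← hscale]
    congr with x
    rw [hψ, smul_eq_mul, inner_neg_right, inner_smul_left]
    congr 2
    simp only [conj_trivial]
    push_cast
    ring

/-- `v` is the (unnormalized, angular) Fourier transform of `H` in the sense of tempered
distributions. -/
def IsTemperedFourier (H v : E → ℂ) : Prop :=
  ∀ φ : 𝓢(E, ℂ), ∫ x, H x * angularFourier φ x = ∫ k, v k * φ k

lemma IsTemperedFourier.integral_mul_angularFourier_add {V v : E → ℂ}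
    (hVv : IsTemperedFourier V v) (φ : 𝓢(E, ℂ)) (y : E) :
    ∫ x, V x * angularFourier φ (x + y) = angularFourier (fun k => v k * φ k) y := by
  let χ : 𝓢(E, ℂ) := SchwartzMap.smulLeftCLM ℂ
    (fun k : E => Complex.exp (-(Complex.I * ((inner ℝ k y : ℝ) : ℂ)))) φ
  have hχ : (χ : E → ℂ) = fun k => Complex.exp (-(Complex.I * ((inner ℝ k y : ℝ) : ℂ))) * φ k :=
    funext fun k => SchwartzMap.smulLeftCLM_apply_apply (hasTemperateGrowth_cexp_neg_I_inner y) φ k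
  have h := hVv χ
  simp only [hχ, angularFourier_cexp_mul] at h
  rw [h, angularFourier]
  congr with k
  ring

lemma memLp_angularFourier (φ : 𝓢(E, ℂ)) (p : ENNReal) : MemLp (angularFourier φ) p := by
  have hpi : (2 * Real.pi)⁻¹ ≠ 0 := by positivity
  have hφ : angularFourier φ = SchwartzMap.compCLMOfContinuousLinearEquiv ℝ
      (ContinuousLinearEquiv.smulLeft (Units.mk0 (2 * Real.pi)⁻¹ hpi)) (𝓕 φ) := by
    ext x
    rw [angularFourier_eq_fourier, ← SchwartzMap.fourier_coe]
    rfl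
  rw [hφ]
  exact SchwartzMap.memLp _ p volume

theorem IsTemperedFourier.convolution {V v : E → ℂ} (hVv : IsTemperedFourier V v)
    (hV : MemLp V 2) (hv : MemLp v ⊤) (hf : Integrable f) :
    IsTemperedFourier (fun x => ∫ y, V (x - y) * f y) (fun k => v k * angularFourier f k) := by
  intro φ
  calc ∫ x, (∫ y, V (x - y) * f y) * angularFourier φ x
      = ∫ y, f y * ∫ x, V x * angularFourier φ (x + y) :=
        integral_integral_mul_sub_mul hV hf (memLp_angularFourier φ 2)
    _ = ∫ y, f y * angularFourier (fun k => v k * φ k) y := by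
        simp only [hVv.integral_mul_angularFourier_add]
    _ = ∫ k, angularFourier f k * (v k * φ k) :=
        (integral_angularFourier_mul_eq hf ((φ.integrable (μ := volume)).mul_of_top_right hv)).symm
    _ = ∫ k, v k * angularFourier f k * φ k := by
        congr with k
        ring

theorem IsTemperedFourier.ae_eq_angularFourier_neg {H h : E → ℂ} (hHh : IsTemperedFourier H h)
    (hH : LocallyIntegrable H) (hh : Integrable h) :
    H =ᵐ[volume] fun x =>
      ((((2 * Real.pi) ^ finrank ℝ E)⁻¹ : ℝ) : ℂ) * angularFourier h (-x) := by
  have hcont : Continuous fun x => ((((2 * Real.pi) ^ finrank ℝ E)⁻¹ : ℝ) : ℂ) *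
      angularFourier h (-x) :=
    continuous_const.mul ((continuous_angularFourier hh).comp continuous_neg)
  refine ae_eq_of_integral_contDiff_smul_eq hH hcont.locallyIntegrable fun g hg hgc => ?_
  have hgc' : HasCompactSupport fun x => (g x : ℂ) := hgc.comp_left Complex.ofReal_zero
  let ψ : 𝓢(E, ℂ) := hgc'.toSchwartzMap (Complex.ofRealCLM.contDiff.comp hg)
  have hψ (x : E) : ψ x = g x := rfl
  obtain ⟨φ, hφ, hφ'⟩ := exists_schwartzMap_angularFourier_eq ψ
  set c : ℂ := ((((2 * Real.pi) ^ finrank ℝ E)⁻¹ : ℝ) : ℂ)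
  calc ∫ x, g x • H x = ∫ x, H x * angularFourier φ x := by
        simp only [hφ, hψ, Complex.real_smul, mul_comm]
    _ = ∫ k, h k * φ k := hHh φ
    _ = c * ∫ k, h k * angularFourier ψ (-k) := by
        rw [← integral_const_mul]
        congr with k
        rw [hφ' k]
        ring
    _ = c * ∫ x, angularFourier h x * ψ (-x) := by
        simp only [← angularFourier_comp_neg,
          integral_angularFourier_mul_eq hh (ψ.integrable (μ := volume)).comp_neg]
    _ = ∫ x, g x • (c * angularFourier h (-x)) := by
        rw [← integral_const_mul, ← integral_neg_eq_self _ volume]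
        congr with x
        rw [neg_neg, hψ, Complex.real_smul]
        ring

theorem IsTemperedFourier.ae_norm_convolution_le {V v : E → ℂ} (hVv : IsTemperedFourier V v)
    (hV : MemLp V 2) (hv : MemLp v ⊤) (hf : Integrable f)
    (hvf : Integrable fun k => v k * angularFourier f k) :
    ∀ᵐ x, ‖∫ y, V (x - y) * f y‖ ≤
      ((2 * Real.pi) ^ finrank ℝ E)⁻¹ * ∫ k, ‖v k * angularFourier f k‖ := by
  filter_upwards [(hVv.convolution hV hv hf).ae_eq_angularFourier_neg
    (locallyIntegrable_integral_mul_sub hV hf) hvf] with x hx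
  have hpi : 0 ≤ (2 * Real.pi) ^ finrank ℝ E := by positivity
  rw [hx, norm_mul, Complex.norm_of_nonneg (inv_nonneg.2 hpi)]
  gcongr
  exact norm_angularFourier_le _ _

end AngularFourier

section Density

/-- The position density `|u|²`, complex-valued so that it has an `angularFourier` transform. -/
def density {X F : Type*} [Norm F] (u : X → F) (x : X) : ℂ := ((‖u x‖ ^ 2 : ℝ) : ℂ)

lemma norm_density {X F : Type*} [Norm F] (u : X → F) (x : X) : ‖density u x‖ = ‖u x‖ ^ 2 :=
  Complex.norm_of_nonneg (sq_nonneg _)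

lemma integrable_density {X F : Type*} [MeasurableSpace X] {μ : Measure X} [NormedAddCommGroup F]
    {u : X → F} (hu : MemLp u 2 μ) : Integrable (density u) μ :=
  ((memLp_two_iff_integrable_sq_norm hu.1).1 hu).ofReal

variable {E F : Type*} [NormedAddCommGroup E] [NormedSpace ℝ E] [NormedAddCommGroup F]
  [InnerProductSpace ℝ F] {u : E → F}

lemma hasFDerivAt_density {x : E} (hu : DifferentiableAt ℝ u x) :
    HasFDerivAt (density u)
      (Complex.ofRealCLM ∘SL (2 • (innerSL ℝ) (u x) ∘SL fderiv ℝ u x)) x :=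
  Complex.ofRealCLM.hasFDerivAt.comp x hu.hasFDerivAt.norm_sq

lemma norm_fderiv_density_le {x : E} (hu : DifferentiableAt ℝ u x) :
    ‖fderiv ℝ (density u) x‖ ≤ ‖u x‖ ^ 2 + ‖fderiv ℝ u x‖ ^ 2 := by
  rw [(hasFDerivAt_density hu).fderiv]
  calc ‖Complex.ofRealCLM ∘SL (2 • (innerSL ℝ) (u x) ∘SL fderiv ℝ u x)‖
      ≤ ‖Complex.ofRealCLM‖ * ‖2 • (innerSL ℝ) (u x) ∘SL fderiv ℝ u x‖ :=
        ContinuousLinearMap.opNorm_comp_le _ _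
    _ ≤ 1 * (2 * (‖u x‖ * ‖fderiv ℝ u x‖)) := by
        rw [Complex.ofRealCLM_norm]
        gcongr
        refine (norm_nsmul_le).trans ?_
        rw [← innerSL_apply_norm ℝ (u x)]
        gcongr
        · simp
        · exact ContinuousLinearMap.opNorm_comp_le _ _
    _ ≤ ‖u x‖ ^ 2 + ‖fderiv ℝ u x‖ ^ 2 := by
        linarith [two_mul_le_add_sq ‖u x‖ ‖fderiv ℝ u x‖]

variable [MeasurableSpace E] [FiniteDimensional ℝ E] [BorelSpace E] {μ : Measure E}

lemma integrable_fderiv_density (hd : Differentiable ℝ u) (hu : MemLp u 2 μ)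
    (hdu : MemLp (fderiv ℝ u) 2 μ) : Integrable (fderiv ℝ (density u)) μ :=
  (((memLp_two_iff_integrable_sq_norm hu.1).1 hu).add
    ((memLp_two_iff_integrable_sq_norm hdu.1).1 hdu)).mono'
    (measurable_fderiv ℝ (density u)).aestronglyMeasurable
    (.of_forall fun x => norm_fderiv_density_le (hd x))

lemma integral_norm_density_add_integral_norm_fderiv_density_le (hd : Differentiable ℝ u)
    (hu : MemLp u 2 μ) (hdu : MemLp (fderiv ℝ u) 2 μ) :
    (∫ x, ‖density u x‖ ∂μ) + ∫ x, ‖fderiv ℝ (density u) x‖ ∂μ ≤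
      2 * ((∫ x, ‖u x‖ ^ 2 ∂μ) + ∫ x, ‖fderiv ℝ u x‖ ^ 2 ∂μ) := by
  have hu2 := (memLp_two_iff_integrable_sq_norm hu.1).1 hu
  have hdu2 := (memLp_two_iff_integrable_sq_norm hdu.1).1 hdu
  have hfderiv : ∫ x, ‖fderiv ℝ (density u) x‖ ∂μ ≤
      (∫ x, ‖u x‖ ^ 2 ∂μ) + ∫ x, ‖fderiv ℝ u x‖ ^ 2 ∂μ := by
    rw [← integral_add hu2 hdu2]
    exact integral_mono (integrable_fderiv_density hd hu hdu).norm (hu2.add hdu2)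
      fun x => norm_fderiv_density_le (hd x)
  have hnonneg : 0 ≤ ∫ x, ‖fderiv ℝ u x‖ ^ 2 ∂μ := integral_nonneg fun _ => sq_nonneg _
  simp only [norm_density]
  linarith

end Density

section Dispersion

lemma one_le_ω (k : ℝ³) : 1 ≤ ω k := Real.one_le_sqrt.2 (by nlinarith [sq_nonneg ‖k‖])

lemma ω_pos (k : ℝ³) : 0 < ω k := one_pos.trans_le (one_le_ω k)

lemma ω_sq (k : ℝ³) : ω k ^ 2 = 1 + ‖k‖ ^ 2 := Real.sq_sqrt (by positivity)

lemma ω_sq_le (k : ℝ³) : ω k ^ 2 ≤ ‖k‖ ^ 2 + ω k := by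
  linarith [ω_sq k, one_le_ω k]

lemma continuous_ω : Continuous ω := by
  unfold ω
  fun_prop

lemma integrable_ω_rpow_neg {r : ℝ} (hr : 3 < r) : Integrable fun k => ω k ^ (-r) := by
  have h := integrable_rpow_neg_one_add_norm_sq (E := ℝ³) (μ := volume) (r := r)
    (by simpa using hr)
  refine h.congr (.of_forall fun k => ?_)
  simp only
  rw [← ω_sq, ← Real.rpow_natCast, ← Real.rpow_mul (ω_pos k).le]
  congr 1
  push_cast
  ring

lemma abs_vker_le (k : ℝ³) : |vker k| ≤ 4 / ω k ^ 3 := by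
  have hω := one_le_ω k
  have hD := ω_sq_le k
  set D := ‖k‖ ^ 2 + ω k
  have hωD : ω k ≤ D := by nlinarith
  have hsq : 2 / D ^ 2 ≤ 2 / (ω k * D) := by
    rw [sq]
    gcongr
  have hmul : 4 / (ω k * D) ≤ 4 / ω k ^ 3 := by
    rw [pow_succ' (ω k) 2]
    gcongr
  have hpos : 0 ≤ 2 / D ^ 2 := by positivity
  have hhalf : 4 / (ω k * D) = 2 * (2 / (ω k * D)) := by ring
  rw [vker, neg_div, abs_le]
  constructor <;> linarith [show 0 ≤ 2 / (ω k * D) by positivity]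

lemma measurable_vker : Measurable vker := by
  have := continuous_ω.measurable
  unfold vker
  fun_prop

lemma memLp_vker_top : MemLp (fun k => (vker k : ℂ)) ⊤ := by
  refine memLp_top_of_bound (by have := measurable_vker; fun_prop) 4 (.of_forall fun k => ?_)
  rw [Complex.norm_real]
  exact (abs_vker_le k).trans (div_le_self (by norm_num) (one_le_pow₀ (one_le_ω k)))

end Dispersion

section PairPotential

variable {V : ℝ³ → ℝ} {u : ℝ³ → ℂ}

lemma norm_vker_mul_angularFourier_density_le (hd : Differentiable ℝ u) (hu : MemLp u 2)
    (hdu : MemLp (fderiv ℝ u) 2) (k : ℝ³) :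
    ‖(vker k : ℂ) * angularFourier (density u) k‖ ≤ 8 * H1sq u * ω k ^ (-4 : ℝ) := by
  have hω := ω_pos k
  have hρ : ω k * ‖angularFourier (density u) k‖ ≤ 2 * H1sq u :=
    (sqrt_mul_norm_angularFourier_le (integrable_density hu)
      (fun x => (hasFDerivAt_density (hd x)).differentiableAt)
      (integrable_fderiv_density hd hu hdu) k).trans
    (integral_norm_density_add_integral_norm_fderiv_density_le hd hu hdu)
  rw [norm_mul, Complex.norm_real]
  calc ‖vker k‖ * ‖angularFourier (density u) k‖
      ≤ 4 / ω k ^ 3 * ‖angularFourier (density u) k‖ := by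
        gcongr
        exact abs_vker_le k
    _ = 4 / ω k ^ 4 * (ω k * ‖angularFourier (density u) k‖) := by field_simp
    _ ≤ 4 / ω k ^ 4 * (2 * H1sq u) := by gcongr
    _ = 8 * H1sq u * ω k ^ (-4 : ℝ) := by
        rw [Real.rpow_neg hω.le, ← Nat.cast_ofNat, Real.rpow_natCast]
        ring

lemma ae_abs_potential_le (hV : MemLp V 2)
    (hVv : IsTemperedFourier (fun x => (V x : ℂ)) fun k => (vker k : ℂ))
    (hd : Differentiable ℝ u) (hu : MemLp u 2) (hdu : MemLp (fderiv ℝ u) 2) :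
    ∀ᵐ x, |∫ y, V (x - y) * ‖u y‖ ^ 2| ≤
      ((2 * Real.pi) ^ 3)⁻¹ * (8 * H1sq u * ∫ k, ω k ^ (-4 : ℝ)) := by
  have hρ := integrable_density hu
  have hbound := norm_vker_mul_angularFourier_density_le hd hu hdu
  have hω4 : Integrable fun k => 8 * H1sq u * ω k ^ (-4 : ℝ) :=
    (integrable_ω_rpow_neg (by norm_num)).const_mul _
  have hvρ : Integrable fun k => (vker k : ℂ) * angularFourier (density u) k :=
    hω4.mono' (memLp_vker_top.1.mul (continuous_angularFourier hρ).aestronglyMeasurable)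
      (.of_forall hbound)
  filter_upwards [hVv.ae_norm_convolution_le hV.ofReal memLp_vker_top hρ hvρ] with x hx
  rw [finrank_euclideanSpace_fin] at hx
  have hint : ∫ k, ‖(vker k : ℂ) * angularFourier (density u) k‖ ≤
      8 * H1sq u * ∫ k, ω k ^ (-4 : ℝ) := by
    rw [← integral_const_mul]
    exact integral_mono hvρ.norm hω4 hbound
  calc |∫ y, V (x - y) * ‖u y‖ ^ 2| = ‖∫ y, (V (x - y) : ℂ) * density u y‖ := by
        simp only [density, ← Complex.ofReal_mul]
        rw [integral_complex_ofReal, Complex.norm_real, Real.norm_eq_abs]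
    _ ≤ ((2 * Real.pi) ^ 3)⁻¹ * ∫ k, ‖(vker k : ℂ) * angularFourier (density u) k‖ := hx
    _ ≤ ((2 * Real.pi) ^ 3)⁻¹ * (8 * H1sq u * ∫ k, ω k ^ (-4 : ℝ)) := by gcongr

lemma abs_pairEnergy_le (hV : MemLp V 2)
    (hVv : IsTemperedFourier (fun x => (V x : ℂ)) fun k => (vker k : ℂ))
    (hd : Differentiable ℝ u) (hu : MemLp u 2) (hdu : MemLp (fderiv ℝ u) 2) :
    |∫ x, ∫ y, V (x - y) * ‖u y‖ ^ 2 * ‖u x‖ ^ 2| ≤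
      ((2 * Real.pi) ^ 3)⁻¹ * (8 * H1sq u * ∫ k, ω k ^ (-4 : ℝ)) * ∫ x, ‖u x‖ ^ 2 := by
  have hu2 := (memLp_two_iff_integrable_sq_norm hu.1).1 hu
  rw [← integral_const_mul, ← Real.norm_eq_abs]
  refine norm_integral_le_of_norm_le (hu2.const_mul _) ?_
  filter_upwards [ae_abs_potential_le hV hVv hd hu hdu] with x hx
  rw [integral_mul_const, norm_mul, Real.norm_eq_abs, Real.norm_of_nonneg (sq_nonneg ‖u x‖)]
  gcongr

end PairPotential

section Dressing

lemma integral_mul_le_sqrt_mul_sqrt {X : Type*} [MeasurableSpace X] {μ : Measure X} {f g : X → ℝ}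
    (hf : MemLp f 2 μ) (hg : MemLp g 2 μ) :
    ∫ x, f x * g x ∂μ ≤ √(∫ x, f x ^ 2 ∂μ) * √(∫ x, g x ^ 2 ∂μ) := by
  have hHolder := integral_mul_norm_le_Lp_mul_Lq Real.HolderConjugate.two_two
    (by simpa using hf) (by simpa using hg)
  simp only [Real.rpow_ofNat, Real.norm_eq_abs, sq_abs, ← Real.sqrt_eq_rpow] at hHolder
  refine (integral_mono (hf.integrable_mul hg) (hf.abs.integrable_mul hg.abs) fun x => ?_).trans
    hHolder
  exact (le_abs_self _).trans_eq (abs_mul _ _)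

/-- The size `|k|B₀(k)` of the dressing form factor `kB₀(k)`. -/
def dressingFactor (k : ℝ³) : ℝ := ‖k‖ * B0 k

/-- The total weight `∫ |k|B₀(k)|α(k)| dk` of the field `α` against the dressing form factor. It
controls `F_α` uniformly in space. -/
def dressingMoment (α : ℝ³ → ℂ) : ℝ := ∫ k, dressingFactor k * ‖α k‖

lemma B0_nonneg (k : ℝ³) : 0 ≤ B0 k := by
  have := ω_pos k
  unfold B0
  positivity

lemma dressingFactor_nonneg (k : ℝ³) : 0 ≤ dressingFactor k :=
  mul_nonneg (norm_nonneg k) (B0_nonneg k)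

lemma dressingMoment_nonneg (α : ℝ³ → ℂ) : 0 ≤ dressingMoment α :=
  integral_nonneg fun k => mul_nonneg (dressingFactor_nonneg k) (norm_nonneg _)

lemma measurable_dressingFactor : Measurable dressingFactor := by
  have := continuous_ω.measurable
  unfold dressingFactor B0
  fun_prop

lemma dressingFactor_sq_le (k : ℝ³) : dressingFactor k ^ 2 ≤ (ω k ^ 3)⁻¹ := by
  have hω := ω_pos k
  have hk : ‖k‖ ^ 2 ≤ ω k ^ 2 := by linarith [ω_sq k]
  calc dressingFactor k ^ 2 = ‖k‖ ^ 2 / (ω k * (‖k‖ ^ 2 + ω k) ^ 2) := by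
        rw [dressingFactor, B0, mul_pow, div_pow, mul_pow, Real.sq_sqrt hω.le]
        ring
    _ ≤ ω k ^ 2 / (ω k * (ω k ^ 2) ^ 2) := by
        gcongr
        exact ω_sq_le k
    _ = (ω k ^ 3)⁻¹ := by field_simp

lemma dressingFactor_mul_rpow_sq_le (s : ℝ) (k : ℝ³) :
    (dressingFactor k * ω k ^ (-s)) ^ 2 ≤ ω k ^ (-(3 + 2 * s)) := by
  have hω := ω_pos k
  calc (dressingFactor k * ω k ^ (-s)) ^ 2 = dressingFactor k ^ 2 * ω k ^ (-(2 * s)) := by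
        rw [mul_pow, ← Real.rpow_mul_natCast hω.le]
        ring_nf
    _ ≤ (ω k ^ 3)⁻¹ * ω k ^ (-(2 * s)) := by
        gcongr
        exact dressingFactor_sq_le k
    _ = ω k ^ (-(3 + 2 * s)) := by
        rw [neg_add, Real.rpow_add hω, Real.rpow_neg hω.le 3, Real.rpow_ofNat]

variable {s : ℝ} {α f : ℝ³ → ℂ}

lemma ω_rpow_mul_norm_sq (s : ℝ) (α : ℝ³ → ℂ) (k : ℝ³) :
    (ω k ^ s * ‖α k‖) ^ 2 = ω k ^ (2 * s) * ‖α k‖ ^ 2 := by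
  rw [mul_pow, ← Real.rpow_mul_natCast (ω_pos k).le, mul_comm 2 s, Nat.cast_ofNat]

lemma memLp_dressingFactor_mul_rpow (hs : 0 < s) :
    MemLp (fun k => dressingFactor k * ω k ^ (-s)) 2 := by
  have hm : Measurable fun k => dressingFactor k * ω k ^ (-s) :=
    measurable_dressingFactor.mul (continuous_ω.measurable.pow_const _)
  refine (memLp_two_iff_integrable_sq hm.aestronglyMeasurable).2
    ((integrable_ω_rpow_neg (r := 3 + 2 * s) (by linarith)).mono'
      (hm.pow_const 2).aestronglyMeasurable (.of_forall fun k => ?_))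
  rw [Real.norm_of_nonneg (sq_nonneg _)]
  exact dressingFactor_mul_rpow_sq_le s k

lemma memLp_ω_rpow_mul_norm (hα : AEStronglyMeasurable α)
    (hfin : ∫⁻ k, ENNReal.ofReal (ω k ^ (2 * s) * ‖α k‖ ^ 2) < ⊤) :
    MemLp (fun k => ω k ^ s * ‖α k‖) 2 := by
  have hm : AEStronglyMeasurable fun k => ω k ^ s * ‖α k‖ :=
    (continuous_ω.measurable.pow_const s).aestronglyMeasurable.mul hα.norm
  refine (memLp_two_iff_integrable_sq hm).2 ⟨hm.pow 2, ?_⟩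
  rw [hasFiniteIntegral_iff_ofReal (.of_forall fun k => sq_nonneg _)]
  simpa only [ω_rpow_mul_norm_sq] using hfin

lemma dressingFactor_mul_norm_eq (s : ℝ) (α : ℝ³ → ℂ) (k : ℝ³) :
    dressingFactor k * ‖α k‖ = dressingFactor k * ω k ^ (-s) * (ω k ^ s * ‖α k‖) := by
  have := (Real.rpow_pos_of_pos (ω_pos k) s).ne'
  rw [Real.rpow_neg (ω_pos k).le]
  field_simp

lemma integrable_dressingFactor_mul_norm (hs : 0 < s)
    (hα : MemLp (fun k => ω k ^ s * ‖α k‖) 2) :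
    Integrable fun k => dressingFactor k * ‖α k‖ := by
  simp only [dressingFactor_mul_norm_eq s α]
  exact (memLp_dressingFactor_mul_rpow hs).integrable_mul hα

lemma dressingMoment_le (hs : 0 < s) (hα : MemLp (fun k => ω k ^ s * ‖α k‖) 2) :
    dressingMoment α ≤ √(∫ k, ω k ^ (-(3 + 2 * s))) * hsNorm s α := by
  have hw := memLp_dressingFactor_mul_rpow hs
  calc dressingMoment α
      = ∫ k, dressingFactor k * ω k ^ (-s) * (ω k ^ s * ‖α k‖) := by
        simp only [dressingMoment, dressingFactor_mul_norm_eq s α]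
    _ ≤ √(∫ k, (dressingFactor k * ω k ^ (-s)) ^ 2) * √(∫ k, (ω k ^ s * ‖α k‖) ^ 2) :=
        integral_mul_le_sqrt_mul_sqrt hw hα
    _ ≤ √(∫ k, ω k ^ (-(3 + 2 * s))) * hsNorm s α := by
        simp only [ω_rpow_mul_norm_sq, hsNorm]
        gcongr
        · exact hw.integrable_sq
        · exact integrable_ω_rpow_neg (by linarith)
        · exact fun k => dressingFactor_mul_rpow_sq_le s k

lemma abs_apply_mul_B0_le (j : Fin 3) (k : ℝ³) : |k j| * B0 k ≤ dressingFactor k :=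
  mul_le_mul_of_nonneg_right (PiLp.norm_apply_le k j) (B0_nonneg k)

lemma norm_two_mul_B0_mul_sum_le {I : Fin 3 → ℂ} {D : ℝ} (hI : ∀ j, ‖I j‖ ≤ D) (k : ℝ³) :
    ‖((2 * B0 k : ℝ) : ℂ) * ∑ j, ((k j : ℝ) : ℂ) * I j‖ ≤ 6 * D * dressingFactor k := by
  have hB := B0_nonneg k
  have hsum : ‖∑ j, ((k j : ℝ) : ℂ) * I j‖ ≤ ∑ _j : Fin 3, ‖k‖ * D := by
    refine norm_sum_le_of_le _ fun j _ => ?_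
    rw [norm_mul, Complex.norm_real]
    exact mul_le_mul (PiLp.norm_apply_le k j) (hI j) (norm_nonneg _) (norm_nonneg _)
  rw [norm_mul, Complex.norm_of_nonneg (by positivity)]
  calc 2 * B0 k * ‖∑ j, ((k j : ℝ) : ℂ) * I j‖ ≤ 2 * B0 k * ∑ _j : Fin 3, ‖k‖ * D := by gcongr
    _ = 6 * D * dressingFactor k := by
        rw [Finset.sum_const, Finset.card_univ, Fintype.card_fin, nsmul_eq_mul, dressingFactor]
        push_cast
        ring

lemma abs_re_integral_conj_mul_le {D : ℝ} (hα : Integrable fun k => dressingFactor k * ‖α k‖)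
    (hf : ∀ k, ‖f k‖ ≤ D * dressingFactor k) :
    |(∫ k, (starRingEnd ℂ) (α k) * f k).re| ≤ D * dressingMoment α := by
  refine (Complex.abs_re_le_norm _).trans ?_
  rw [dressingMoment, ← integral_const_mul]
  refine norm_integral_le_of_norm_le (hα.const_mul D) (.of_forall fun k => ?_)
  rw [norm_mul, RCLike.norm_conj]
  calc ‖α k‖ * ‖f k‖ ≤ ‖α k‖ * (D * dressingFactor k) := by
        gcongr
        exact hf k
    _ = D * (dressingFactor k * ‖α k‖) := by ring

lemma abs_Fα_le (hα : Integrable fun k => dressingFactor k * ‖α k‖) (j : Fin 3) (x : ℝ³) :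
    |Fα α j x| ≤ 2 * dressingMoment α := by
  rw [Fα, abs_mul, abs_two]
  gcongr
  refine (Complex.abs_re_le_norm _).trans
    (norm_integral_le_of_norm_le hα (.of_forall fun k => ?_))
  rw [norm_mul, norm_mul, mul_comm Complex.I, Complex.norm_exp_ofReal_mul_I, mul_one,
    Complex.norm_real, norm_mul, Real.norm_of_nonneg (B0_nonneg k)]
  gcongr
  exact abs_apply_mul_B0_le j k

variable {u : ℝ³ → ℂ}

lemma norm_pd_le (u : ℝ³ → ℂ) (j : Fin 3) (x : ℝ³) : ‖pd u j x‖ ≤ ‖fderiv ℝ u x‖ := by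
  simpa [pd] using (fderiv ℝ u x).le_opNorm (EuclideanSpace.single j 1)

lemma norm_fu_le (hu : MemLp u 2) (hdu : MemLp (fderiv ℝ u) 2) (k : ℝ³) :
    ‖fu u k‖ ≤ 3 * H1sq u * dressingFactor k := by
  have hu2 := (memLp_two_iff_integrable_sq_norm hu.1).1 hu
  have hdu2 := (memLp_two_iff_integrable_sq_norm hdu.1).1 hdu
  have hcurrent (j : Fin 3) : ‖∫ x, Complex.exp (-(Complex.I * ((inner ℝ k x : ℝ) : ℂ))) *
      (starRingEnd ℂ) (u x) * (-Complex.I * pd u j x)‖ ≤ H1sq u / 2 := by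
    rw [H1sq, ← integral_add hu2 hdu2, ← integral_div]
    refine norm_integral_le_of_norm_le ((hu2.add hdu2).div_const 2) (.of_forall fun x => ?_)
    simp only [norm_mul, norm_neg, Complex.norm_I, norm_cexp_neg_I_mul, RCLike.norm_conj, one_mul]
    have hpd : ‖u x‖ * ‖pd u j x‖ ≤ ‖u x‖ * ‖fderiv ℝ u x‖ := by
      gcongr
      exact norm_pd_le u j x
    linarith [two_mul_le_add_sq ‖u x‖ ‖fderiv ℝ u x‖]
  refine (norm_two_mul_B0_mul_sum_le hcurrent k).trans_eq ?_
  ring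

lemma norm_gualpha_le (hu : MemLp u 2) (hα : Integrable fun k => dressingFactor k * ‖α k‖)
    (k : ℝ³) :
    ‖gualpha u α k‖ ≤ 12 * dressingMoment α * (∫ x, ‖u x‖ ^ 2) * dressingFactor k := by
  have hu2 := (memLp_two_iff_integrable_sq_norm hu.1).1 hu
  have hfield (j : Fin 3) : ‖∫ x, Complex.exp (-(Complex.I * ((inner ℝ k x : ℝ) : ℂ))) *
      ((Fα α j x : ℝ) : ℂ) * ((‖u x‖ ^ 2 : ℝ) : ℂ)‖ ≤
      2 * dressingMoment α * ∫ x, ‖u x‖ ^ 2 := by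
    rw [← integral_const_mul]
    refine norm_integral_le_of_norm_le (hu2.const_mul _) (.of_forall fun x => ?_)
    rw [norm_mul, norm_mul, norm_cexp_neg_I_mul, one_mul, Complex.norm_real,
      Complex.norm_of_nonneg (sq_nonneg ‖u x‖)]
    gcongr
    exact abs_Fα_le hα j x
  refine (norm_two_mul_B0_mul_sum_le hfield k).trans_eq ?_
  ring

end Dressing

section EnergyShift

lemma integral_norm_sq_le_H1sq (u : ℝ³ → ℂ) : ∫ x, ‖u x‖ ^ 2 ≤ H1sq u :=
  le_add_of_nonneg_right (integral_nonneg fun _ => sq_nonneg _)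

lemma H1norm_sq (u : ℝ³ → ℂ) : H1norm u ^ 2 = H1sq u :=
  Real.sq_sqrt ((integral_nonneg fun _ => sq_nonneg _).trans (integral_norm_sq_le_H1sq u))

lemma abs_μshift_le {V : ℝ³ → ℝ} {u α : ℝ³ → ℂ} (hV : MemLp V 2)
    (hVv : IsTemperedFourier (fun x => (V x : ℂ)) fun k => (vker k : ℂ))
    (hd : Differentiable ℝ u) (hu : MemLp u 2) (hdu : MemLp (fderiv ℝ u) 2)
    (hα : Integrable fun k => dressingFactor k * ‖α k‖) :
    |μshift V u α| ≤
      4 * ((2 * Real.pi) ^ 3)⁻¹ * (∫ k, ω k ^ (-4 : ℝ)) * (H1sq u * ∫ x, ‖u x‖ ^ 2) +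
        3 * (H1sq u * dressingMoment α) + 12 * (dressingMoment α ^ 2 * ∫ x, ‖u x‖ ^ 2) := by
  have hpair := abs_pairEnergy_le hV hVv hd hu hdu
  have hfu := abs_re_integral_conj_mul_le hα (norm_fu_le hu hdu)
  have hgu := abs_re_integral_conj_mul_le hα (norm_gualpha_le hu hα)
  rw [μshift]
  refine (abs_add_three _ _ _).trans ?_
  rw [abs_mul, abs_of_pos one_half_pos]
  linarith

lemma add_add_le_mul_one_add_sq_mul_max {c m H n M a : ℝ} (hc : 0 ≤ c) (hm : 0 ≤ m) (hn : 0 ≤ n)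
    (hnH : n ≤ H) (hM : 0 ≤ M) (ha : 0 ≤ a) (hMa : M ≤ m * a) :
    c * (H * n) + 3 * (H * M) + 12 * (M ^ 2 * n) ≤
      (c + 3 * m + 12 * m ^ 2) * H * (1 + a) ^ 2 * max 1 n := by
  have hH : 0 ≤ H := hn.trans hnH
  have hMa' : M ≤ m * (1 + a) := hMa.trans (by gcongr; linarith)
  have ha1 : 1 ≤ 1 + a := by linarith
  have hn_max : n ≤ max 1 n := le_max_right _ _
  have hone_max : 1 ≤ max 1 n := le_max_left _ _
  have hpair : H * n ≤ H * (1 + a) ^ 2 * max 1 n := by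
    gcongr
    exact le_mul_of_one_le_right hH (one_le_pow₀ ha1)
  have hfu : H * M ≤ m * (H * (1 + a) ^ 2 * max 1 n) :=
    calc H * M ≤ H * (m * (1 + a) ^ 2) := by
          gcongr
          exact hMa'.trans (mul_le_mul_of_nonneg_left (le_self_pow₀ ha1 two_ne_zero) hm)
      _ ≤ H * (m * (1 + a) ^ 2) * max 1 n := le_mul_of_one_le_right (by positivity) hone_max
      _ = m * (H * (1 + a) ^ 2 * max 1 n) := by ring
  have hgu : M ^ 2 * n ≤ m ^ 2 * (H * (1 + a) ^ 2 * max 1 n) :=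
    calc M ^ 2 * n ≤ (m * (1 + a)) ^ 2 * H := by gcongr
      _ ≤ (m * (1 + a)) ^ 2 * H * max 1 n := le_mul_of_one_le_right (by positivity) hone_max
      _ = m ^ 2 * (H * (1 + a) ^ 2 * max 1 n) := by ring
  linarith [mul_le_mul_of_nonneg_left hpair hc]

theorem mu_bound_general (s : ℝ) (hs : 0 < s) :
    ∃ C > 0, ∀ V : ℝ³ → ℝ, MemLp V 2 →
      IsTemperedFourier (fun x => (V x : ℂ)) (fun k => (vker k : ℂ)) →
      ∀ u α : ℝ³ → ℂ, Differentiable ℝ u → MemLp u 2 → MemLp (fderiv ℝ u) 2 →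
        AEStronglyMeasurable α → ∫⁻ k, ENNReal.ofReal (ω k ^ (2 * s) * ‖α k‖ ^ 2) < ⊤ →
        |μshift V u α| ≤
          C * H1norm u ^ 2 * (1 + hsNorm s α) ^ 2 * max 1 (∫ x, ‖u x‖ ^ 2) := by
  set c : ℝ := 4 * ((2 * Real.pi) ^ 3)⁻¹ * ∫ k, ω k ^ (-4 : ℝ)
  set m : ℝ := √(∫ k, ω k ^ (-(3 + 2 * s)))
  have hc : 0 ≤ c :=
    mul_nonneg (by positivity) (integral_nonneg fun k => Real.rpow_nonneg (ω_pos k).le _)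
  have hm : 0 ≤ m := Real.sqrt_nonneg _
  refine ⟨c + 3 * m + 12 * m ^ 2 + 1, by positivity,
    fun V hV hVv u α hd hu hdu hα hfin => ?_⟩
  have hαs := memLp_ω_rpow_mul_norm hα hfin
  refine (abs_μshift_le hV hVv hd hu hdu (integrable_dressingFactor_mul_norm hs hαs)).trans ?_
  rw [H1norm_sq]
  refine (add_add_le_mul_one_add_sq_mul_max hc hm (integral_nonneg fun _ => sq_nonneg _)
    (integral_norm_sq_le_H1sq u) (dressingMoment_nonneg α) (Real.sqrt_nonneg _)
    (dressingMoment_le hs hαs)).trans ?_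
  have hH : 0 ≤ H1sq u := H1norm_sq u ▸ sq_nonneg _
  gcongr ?_ * _ * _ * _
  exact le_add_of_nonneg_right zero_le_one

end EnergyShift

/-- For every `s > 0` there is `C > 0` such that for the effective pair potential `V`
(the real `V ∈ L²` with unnormalized Fourier transform `v`), and for every differentiable
`u` with `∇u ∈ L²`, `‖u‖_{L²} = 1`, and every `α` with `‖α‖_{h_s} < ∞`,
`|μ_{u,α}| ≤ C‖u‖_{H¹}²(1+‖α‖_{h_s})²`. -/
theorem mu_bound (s : ℝ) (hs : 0 < s) :
    ∃ C > 0, ∀ V : EuclideanSpace ℝ (Fin 3) → ℝ, MemLp V 2 volume →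
      (∀ φ : SchwartzMap (EuclideanSpace ℝ (Fin 3)) ℂ,
        (∫ x, ((V x : ℝ) : ℂ) *
            ∫ k, Complex.exp (-(Complex.I * ((inner ℝ k x : ℝ) : ℂ))) * φ k) =
          ∫ k, ((vker k : ℝ) : ℂ) * φ k) →
      ∀ (u α : EuclideanSpace ℝ (Fin 3) → ℂ),
        Differentiable ℝ u → MemLp u 2 volume →
        MemLp (fun x => fderiv ℝ u x) 2 volume →
        (∫ x, ‖u x‖ ^ 2) = 1 →
        Measurable α →
        (∫⁻ k, ENNReal.ofReal (ω k ^ (2 * s) * ‖α k‖ ^ 2) < ⊤) →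
        |μshift V u α| ≤ C * H1norm u ^ 2 * (1 + hsNorm s α) ^ 2 := by
  obtain ⟨C, hC, h⟩ := mu_bound_general s hs
  exact ⟨C, hC, fun V hV hVv u α hd hu hdu h1 hα hfin => by
    simpa [h1] using h V hV hVv u α hd hu hdu hα.aestronglyMeasurable hfin⟩

end
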